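/- arXiv:2107.14353 — 2 statements merged into one kernel-verified Lean document; each statement's English description precedes it below -/
import Mathlib

section
/- Let K be a field and let f, g ∈ K be nonsquare elements. Then T_f = T_g if and only if T_f ∩ T_g ≠ {1}, i.e. the two subgroups of PGL₂(K) are equal as soon as they share a non-identity element. -/
/-!
A non-identity class in `T_f` comes from a matrix `((a, b f), (b, a))` with `b ≠ 0`, since for
`b = 0` the matrix is scalar. The ratio of its two off-diagonal entries is `f`, and this ratio is
unchanged by scalars, hence depends on the class alone. So a common non-identity element of `T_f`
and `T_g` forces `f = g`. Conversely `T_f` always contains the non-identity class of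
`((0, f), (1, 0))`, so `T_f ∩ T_f` is not trivial.
-/

open Matrix Polynomial

/-- the general linear group GL₂(K) -/
abbrev GL2 (K : Type*) [Field K] := Matrix.GeneralLinearGroup (Fin 2) K

/-- the projective general linear group PGL₂(K) = GL₂(K)/centre -/
abbrev PGL2 (K : Type*) [Field K] := GL2 K ⧸ Subgroup.center (GL2 K)

/-- the canonical projection p : GL₂(K) → PGL₂(K) -/
def pgl (K : Type*) [Field K] : GL2 K →* PGL2 K := QuotientGroup.mk' _

/-- the subset T_f of PGL₂(K): classes of the matrices ((a, b·f), (b, a)) with (a,b) ≠ (0,0) -/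
def Tset (K : Type*) [Field K] (f : K) : Set (PGL2 K) :=
  { x | ∃ (M : GL2 K) (a b : K), ¬(a = 0 ∧ b = 0) ∧
      (M : Matrix (Fin 2) (Fin 2) K) = !![a, b * f; b, a] ∧ x = pgl K M }

/-- Central elements of `GL₂(K)` are scalar, so equality of classes is proportionality. -/
lemma coe_eq_smul_of_pgl_eq {K : Type*} [Field K] {M N : GL2 K} (h : pgl K M = pgl K N) :
    ∃ c : K, c ≠ 0 ∧ (N : Matrix (Fin 2) (Fin 2) K) = c • (M : Matrix (Fin 2) (Fin 2) K) := by
  have h' : M⁻¹ * N ∈ Subgroup.center (GL2 K) := QuotientGroup.eq.mp h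
  rw [Matrix.GeneralLinearGroup.center_eq_range_scalar] at h'
  obtain ⟨u, hu⟩ := h'
  refine ⟨u, u.ne_zero, ?_⟩
  have hN : N = M * Matrix.GeneralLinearGroup.scalar (Fin 2) u := by rw [hu]; group
  rw [hN]
  ext i j
  simp [mul_comm]

lemma pgl_eq_one_of_scalar {K : Type*} [Field K] {M : GL2 K} {a : K}
    (hM : (M : Matrix (Fin 2) (Fin 2) K) = !![a, 0; 0, a]) : pgl K M = 1 := by
  have : M ∈ Subgroup.center (GL2 K) := by
    rw [Subgroup.mem_center_iff]
    intro N
    ext i j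
    fin_cases i <;> fin_cases j <;> simp [hM, Matrix.mul_apply, mul_comm]
  exact (QuotientGroup.eq_one_iff M).mpr this

lemma one_mem_Tset (K : Type*) [Field K] (f : K) : (1 : PGL2 K) ∈ Tset K f :=
  ⟨1, 1, 0, by simp, by simp [Matrix.one_fin_two], (map_one _).symm⟩

/-- `T_f` contains a non-identity element, namely the class of `((0, f), (1, 0))`. -/
lemma exists_ne_one_mem_Tset {K : Type*} [Field K] {f : K} (hf : f ≠ 0) :
    ∃ x ∈ Tset K f, x ≠ 1 := by
  let M : GL2 K := Matrix.GeneralLinearGroup.mkOfDetNeZero !![0, 1 * f; 1, 0] (by simpa using hf)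
  refine ⟨pgl K M, ⟨M, 0, 1, by simp, rfl, rfl⟩, fun h => ?_⟩
  obtain ⟨c, -, hc⟩ := coe_eq_smul_of_pgl_eq (h.trans (map_one (pgl K)).symm)
  have := congrFun (congrFun hc 0) 0
  simp [M, Matrix.GeneralLinearGroup.mkOfDetNeZero] at this

/-- The ratio of the off-diagonal entries recovers `f` from any non-identity element of `T_f`. -/
lemma eq_of_mem_Tset_of_ne_one {K : Type*} [Field K] {f g : K} {x : PGL2 K}
    (hxf : x ∈ Tset K f) (hxg : x ∈ Tset K g) (hx : x ≠ 1) : f = g := by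
  obtain ⟨M, a, b, -, hM, rfl⟩ := hxf
  obtain ⟨N, a', b', -, hN, hMN⟩ := hxg
  have hb : b ≠ 0 := by
    rintro rfl
    exact hx (pgl_eq_one_of_scalar (a := a) (by simpa using hM))
  obtain ⟨c, hc, hNM⟩ := coe_eq_smul_of_pgl_eq hMN
  rw [hM, hN] at hNM
  have h₁ : b' * g = c * (b * f) := by simpa using congrFun (congrFun hNM 0) 1
  have h₂ : b' = c * b := by simpa using congrFun (congrFun hNM 1) 0
  rw [h₂, mul_assoc] at h₁
  exact (mul_left_cancel₀ hb (mul_left_cancel₀ hc h₁)).symm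

/-- For nonsquare elements `f, g ∈ K`, one has `T_f = T_g` if and only if
`T_f ∩ T_g ≠ {1}`. -/
theorem stmt6 (K : Type*) [Field K] (f g : K) (hf : ¬ IsSquare f) (hg : ¬ IsSquare g) :
    Tset K f = Tset K g ↔ Tset K f ∩ Tset K g ≠ {(1 : PGL2 K)} := by
  constructor
  · intro h h1
    have hf0 : f ≠ 0 := by
      rintro rfl
      exact hf IsSquare.zero
    obtain ⟨x, hxf, hx⟩ := exists_ne_one_mem_Tset hf0
    exact hx (h1.subset ⟨hxf, h ▸ hxf⟩)
  · intro h
    by_contra hne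
    refine h (Set.Subset.antisymm (fun x hx => ?_) ?_)
    · by_contra hx1
      exact hne (congrArg (Tset K) (eq_of_mem_Tset_of_ne_one hx.1 hx.2 hx1))
    · rintro _ rfl
      exact ⟨one_mem_Tset K f, one_mem_Tset K g⟩
end

section
/- Let f be a squarefree integer with f ≠ 0 and f ≠ 1, and let L = ℚ(√f) be the quadratic field ℚ[X]/(X²−f). Then the quotient group Lˣ/ℚˣ is isomorphic, as an abstract group, to: ℤ/2ℤ × F if f ∉ {−1, −3}; ℤ/4ℤ × F if f = −1; and ℤ/6ℤ × F if f = −3, where F denotes a free abelian group of countably infinite rank (i.e. ⊕_{n ∈ ℕ} ℤ). -/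
open Polynomial

/-!
Write `σ` for the conjugation of `L = ℚ(δ)`, `δ² = f`. Since `ℚ` is its fixed field, `x ↦ σ x / x`
has kernel `ℚˣ` and embeds `A = Lˣ/ℚˣ` into `Lˣ` (`exists_injective_of_aut`).

* Decomposition. The valuations at the primes of `𝓞 L` map `Lˣ` to a free abelian group with
  kernel the finitely generated group `(𝓞 L)ˣ` (`exists_map_finsupp_ker_finite`). By restriction
  `A` has such a map too. Subgroups of free abelian groups are free (`free_submodule_finsupp`), so
  `A` splits as its finite torsion subgroup times a free group (`torsion_prod_of_map_finsupp`).
* Rank. `A` is countable, so the free part has rank `ℵ₀` as soon as `A` is not finitely generated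
  (`not_fg`). Modulo squares the norm descends to `A`, so it suffices to find norms with odd
  valuation at arbitrarily large primes `p`; `a + δ` does this when `p` exactly divides `a² - f`.
* Torsion. Being embedded in `Lˣ`, the torsion subgroup is cyclic of some order `n`, and `L`
  contains a primitive `n`-th root of unity. As `[L : ℚ] = 2`, this gives `φ(n) ≤ 2`, so
  `n ∈ {1, 2, 3, 4, 6}`. The class of `δ` has order two (`σ δ / δ = -1`), so `n ∈ {2, 4, 6}`, and
  `n = 4` (resp. `6`) makes `-1` (resp. `-3`) a square in `L`, which forces `f = -1`
  (resp. `f = -3`). Conversely `σ (1 - δ) / (1 - δ)` is a primitive fourth (resp. cube) root of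
  unity when `f = -1` (resp. `-3`).
-/

/-! ### Abelian groups mapping to a free group -/

/-- A subgroup of a free abelian group of arbitrary rank is free. After well-ordering the index
set, a basis is obtained by choosing, for each index `k`, an element supported on `Set.Iic k`
whose coefficient at `k` generates the ideal of all such coefficients; the indices where this
ideal vanishes are dropped. -/
theorem free_submodule_finsupp {ι : Type*} (N : Submodule ℤ (ι →₀ ℤ)) : Module.Free ℤ N := by
  classical
  obtain ⟨_, _⟩ := exists_wellFoundedLT ι
  let low (k : ι) : Submodule ℤ (ι →₀ ℤ) := N ⊓ Finsupp.supported ℤ ℤ (Set.Iic k)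
  let I (k : ι) : Submodule ℤ ℤ := (low k).map (Finsupp.lapply k)
  have hgen : ∀ k, ∃ v ∈ low k, ∀ x ∈ low k, ∃ r : ℤ, x k = r * v k := by
    intro k
    obtain ⟨a, ha⟩ := (IsPrincipalIdealRing.principal (I k)).principal
    have hmem : a ∈ I k := ha ▸ Submodule.mem_span_singleton_self a
    obtain ⟨v, hv, hva⟩ := hmem
    refine ⟨v, hv, fun x hx => ?_⟩
    have hxI : x k ∈ I k := ⟨x, hx, rfl⟩
    rw [ha, Submodule.mem_span_singleton] at hxI
    obtain ⟨r, hr⟩ := hxI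
    exact ⟨r, by rw [← hr, ← hva]; rfl⟩
  choose v hv hvgen using hgen
  have hvzero : ∀ j k, j < k → v j k = 0 := by
    intro j k hjk
    by_contra hne
    have := (Finsupp.mem_supported ℤ _).1 (hv j).2 (Finsupp.mem_support_iff.2 hne)
    exact absurd hjk (not_lt.2 this)
  let w : {k // v k k ≠ 0} → N := fun k => ⟨v k.1, (hv k.1).1⟩
  have hspan : ∀ k, ∀ x ∈ low k, ∀ hx : x ∈ N, (⟨x, hx⟩ : N) ∈ Submodule.span ℤ (Set.range w) := by
    intro k
    induction k using WellFoundedLT.induction with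
    | ind k ih =>
    intro x hxk hx
    obtain ⟨r, hr⟩ := hvgen k x hxk
    -- cancelling the leading coefficient lowers the top of the support
    have key : ∀ y (hy : y ∈ N), y ∈ low k → y k = 0 →
        (⟨y, hy⟩ : N) ∈ Submodule.span ℤ (Set.range w) := by
      intro y hy hyk hy0
      by_cases h0 : y = 0
      · subst h0; exact Submodule.zero_mem _
      have hne : y.support.Nonempty := Finsupp.support_nonempty_iff.2 h0
      have hm := y.support.max'_mem hne
      refine ih (y.support.max' hne) ?_ y ⟨hy, ?_⟩ hy
      · refine lt_of_le_of_ne ((Finsupp.mem_supported ℤ _).1 hyk.2 hm) fun h => ?_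
        rw [h] at hm
        exact Finsupp.mem_support_iff.1 hm hy0
      · exact (Finsupp.mem_supported ℤ _).2 fun j hj => y.support.le_max' j hj
    by_cases hk : v k k = 0
    · exact key x hx hxk (by rw [hr, hk, mul_zero])
    · have h1 := key (x - r • v k) (N.sub_mem hx (N.smul_mem r (hv k).1))
        ((low k).sub_mem hxk ((low k).smul_mem r (hv k))) (by simp [hr])
      have h2 : (⟨x, hx⟩ : N) = ⟨x - r • v k, N.sub_mem hx (N.smul_mem r (hv k).1)⟩
          + r • w ⟨k, hk⟩ := by
        ext1; simp [w]
      rw [h2]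
      exact Submodule.add_mem _ h1
        (Submodule.smul_mem _ _ (Submodule.subset_span ⟨_, rfl⟩))
  have hli : LinearIndependent ℤ w := by
    rw [linearIndependent_iff]
    intro l hl
    by_contra h0
    have hne : l.support.Nonempty := Finsupp.support_nonempty_iff.2 h0
    set m := l.support.max' hne with hm
    have hmem : m ∈ l.support := l.support.max'_mem hne
    have h1 : (N.subtype (Finsupp.linearCombination ℤ w l)) m.1 = 0 := by rw [hl]; simp
    rw [Finsupp.linearCombination_apply, Finsupp.sum, map_sum, Finsupp.finsetSum_apply,
      Finset.sum_eq_single_of_mem m hmem] at h1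
    · simp only [map_smul, Finsupp.smul_apply, smul_eq_mul, mul_eq_zero] at h1
      rcases h1 with h1 | h1
      · exact Finsupp.mem_support_iff.1 hmem h1
      · exact m.2 h1
    · intro j hj hjm
      have hlt : j < m := lt_of_le_of_ne (l.support.le_max' j hj) hjm
      have := hvzero j.1 m.1 hlt
      simp only [map_smul, Finsupp.smul_apply, smul_eq_mul, mul_eq_zero]
      exact Or.inr this
  refine Module.Free.of_basis (Module.Basis.mk hli ?_)
  rintro ⟨x, hx⟩ -
  by_cases h0 : x = 0
  · subst h0; exact Submodule.zero_mem _
  have hne : x.support.Nonempty := Finsupp.support_nonempty_iff.2 h0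
  exact hspan (x.support.max' hne) x
    ⟨hx, (Finsupp.mem_supported ℤ _).2 fun j hj => x.support.le_max' j hj⟩ hx

/-- A countable abelian group that is not finitely generated, and maps to a free abelian group with
finitely generated kernel, is the product of a finite torsion group and `⊕_ℕ ℤ`. The image is
free, hence splits off, and the kernel modulo its torsion is free as well. -/
theorem torsion_prod_of_map_finsupp {M ι : Type*} [AddCommGroup M] [Countable M]
    (φ : M →ₗ[ℤ] (ι →₀ ℤ)) (hfg : Module.Finite ℤ (LinearMap.ker φ))
    (hM : ¬ Module.Finite ℤ M) :
    Finite (Submodule.torsion ℤ M) ∧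
      Nonempty (M ≃ₗ[ℤ] Submodule.torsion ℤ M × (ℕ →₀ ℤ)) := by
  have hker : Submodule.torsion ℤ M ≤ LinearMap.ker φ := by
    rintro x ⟨a, ha⟩
    have h1 : (a : ℤ) • φ x = 0 := by rw [← map_smul]; exact (congrArg φ ha).trans (map_zero φ)
    exact (smul_eq_zero.1 h1).resolve_left (nonZeroDivisors.coe_ne_zero a)
  have hTfin : Module.Finite ℤ (Submodule.torsion ℤ M) :=
    Module.Finite.of_injective (Submodule.inclusion hker) (Submodule.inclusion_injective hker)
  have hT : Finite (Submodule.torsion ℤ M) :=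
    Module.finite_of_fg_torsion _ (Submodule.torsion_isTorsion)
  refine ⟨hT, ?_⟩
  have hfree : Module.Free ℤ (LinearMap.range φ) := free_submodule_finsupp _
  obtain ⟨s, hs⟩ := φ.rangeRestrict.exists_rightInverse_of_surjective φ.range_rangeRestrict
  have hs' : ∀ y, φ (s y) = y := fun y => congrArg Subtype.val (LinearMap.congr_fun hs y)
  -- the projection of `M` onto the kernel of `φ` determined by the splitting `s`
  let p : M →ₗ[ℤ] LinearMap.ker φ :=
    (LinearMap.id - s ∘ₗ φ.rangeRestrict).codRestrict _ (by intro x; simp [hs'])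
  let K := LinearMap.ker φ
  let Q := K ⧸ Submodule.torsion ℤ K
  let ψ : M →ₗ[ℤ] Q × LinearMap.range φ :=
    ((Submodule.torsion ℤ K).mkQ ∘ₗ p).prod φ.rangeRestrict
  have hp : ∀ x : K, p x = x := by
    intro x
    have : φ.rangeRestrict x = 0 := Subtype.ext x.2
    ext1; simp [p, this]
  have hψ : Function.Surjective ψ := by
    rintro ⟨q, y⟩
    obtain ⟨k, rfl⟩ := Submodule.mkQ_surjective _ q
    have hk : φ.rangeRestrict k = 0 := Subtype.ext k.2
    have hsy : φ.rangeRestrict (s y) = y := LinearMap.congr_fun hs y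
    have hpy : p (s y) = 0 := by ext1; simp [p, hsy]
    refine ⟨k + s y, ?_⟩
    simp [ψ, hp, hk, hsy, hpy]
  have hψker : LinearMap.ker ψ = Submodule.torsion ℤ M := by
    ext x
    constructor
    · intro hx
      have h2 : φ.rangeRestrict x = 0 := congrArg Prod.snd hx
      have h3 : φ x = 0 := congrArg Subtype.val h2
      have h1 : (Submodule.torsion ℤ K).mkQ (p x) = 0 := congrArg Prod.fst hx
      rw [show p x = ⟨x, h3⟩ from hp ⟨x, h3⟩, Submodule.mkQ_apply,
        Submodule.Quotient.mk_eq_zero] at h1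
      obtain ⟨a, ha⟩ := h1
      exact ⟨a, congrArg Subtype.val ha⟩
    · intro hx
      have h3 : φ x = 0 := hker hx
      have h2 : φ.rangeRestrict x = 0 := Subtype.ext h3
      refine Prod.ext ?_ h2
      change (Submodule.torsion ℤ K).mkQ (p x) = 0
      rw [show p x = ⟨x, h3⟩ from hp ⟨x, h3⟩, Submodule.mkQ_apply,
        Submodule.Quotient.mk_eq_zero]
      obtain ⟨a, ha⟩ := hx
      exact ⟨a, Subtype.ext ha⟩
  have hK : Module.Finite ℤ K := hfg
  have hQ : Module.Finite ℤ Q := inferInstance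
  have hQt : Module.IsTorsionFree ℤ Q := inferInstance
  have hQf : Module.Free ℤ Q := inferInstance
  let N := Q × LinearMap.range φ
  have hN : Module.Free ℤ N := inferInstance
  obtain ⟨t, ht⟩ := ψ.exists_rightInverse_of_surjective (LinearMap.range_eq_top.2 hψ)
  have ht' : ∀ y, ψ (t y) = y := LinearMap.congr_fun ht
  have hb : ∀ x, x - t (ψ x) ∈ Submodule.torsion ℤ M := fun x => by
    rw [← hψker]; simp [ht']
  have hz : ∀ x : Submodule.torsion ℤ M, ψ x = 0 := fun x => by
    exact hψker.ge x.2
  let e : M ≃ₗ[ℤ] Submodule.torsion ℤ M × N :=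
    LinearEquiv.ofLinearMap
      (((LinearMap.id - t ∘ₗ ψ).codRestrict _ hb).prod ψ)
      ((Submodule.torsion ℤ M).subtype.coprod t)
      (by
        refine LinearMap.ext fun x => Prod.ext (Subtype.ext ?_) ?_
        · simp [hz, ht']
        · simp [hz, ht'])
      (by ext x; simp)
  have hNc : Countable N := Function.Surjective.countable hψ
  let b := Module.Free.chooseBasis ℤ N
  have hcount : Countable (Module.Free.ChooseBasisIndex ℤ N) := b.injective.countable
  have hinf : Infinite (Module.Free.ChooseBasisIndex ℤ N) := by
    rw [← not_finite_iff_infinite]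
    intro hfin
    have : Module.Finite ℤ N := Module.Finite.of_basis b
    exact hM (Module.Finite.equiv e.symm)
  obtain ⟨d⟩ := nonempty_equiv_of_countable (α := Module.Free.ChooseBasisIndex ℤ N) (β := ℕ)
  exact ⟨e.trans ((LinearEquiv.refl ℤ _).prodCongr (b.repr.trans (Finsupp.domLCongr d)))⟩

/-! ### Valuations on the multiplicative group of a number field -/

open IsDedekindDomain NumberField in
/-- The family of all valuations of `Lˣ` at the primes of `𝓞 L`; its kernel is `(𝓞 L)ˣ`, which is
finitely generated by Dirichlet's unit theorem. -/
theorem exists_map_finsupp_ker_finite (L : Type*) [Field L] [NumberField L] :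
    ∃ φ : Additive Lˣ →ₗ[ℤ] (HeightOneSpectrum (𝓞 L) →₀ ℤ),
      Module.Finite ℤ (LinearMap.ker φ) := by
  classical
  have hone : ∀ (v : HeightOneSpectrum (𝓞 L)) (x : Lˣ),
      v.valuationOfNeZero x = 1 ↔ v.valuation L (x : L) = 1 := fun v x => by
    rw [← WithZero.coe_inj, HeightOneSpectrum.valuationOfNeZero_eq, WithZero.coe_one]
  have hfin : ∀ x : Lˣ, {v : HeightOneSpectrum (𝓞 L) |
      Multiplicative.toAdd (v.valuationOfNeZero x) ≠ 0}.Finite := by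
    intro x
    refine ((HeightOneSpectrum.Support.finite (𝓞 L) (x : L)).union
      (HeightOneSpectrum.Support.finite (𝓞 L) ((x⁻¹ : Lˣ) : L))).subset fun v hv => ?_
    have hv1 : v.valuation L (x : L) ≠ 1 := fun h => hv (by rw [(hone v x).2 h]; rfl)
    rcases lt_or_gt_of_ne hv1 with h | h
    · right
      change 1 < v.valuation L ((x⁻¹ : Lˣ) : L)
      rw [Units.val_inv_eq_inv_val, map_inv₀]
      exact (one_lt_inv₀ (by simp [zero_lt_iff])).2 h
    · exact Or.inl h
  let φ : Additive Lˣ →+ (HeightOneSpectrum (𝓞 L) →₀ ℤ) :=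
    { toFun x := Finsupp.onFinset (hfin x.toMul).toFinset
        (fun v => Multiplicative.toAdd (v.valuationOfNeZero x.toMul)) (by simp)
      map_zero' := by ext v; simp
      map_add' x y := by ext v; simp }
  refine ⟨φ.toIntLinearMap, ?_⟩
  let u : Additive (𝓞 L)ˣ →ₗ[ℤ] Additive Lˣ :=
    (MonoidHom.toAdditive (Units.map (algebraMap (𝓞 L) L : 𝓞 L →* L))).toIntLinearMap
  have hle : LinearMap.ker φ.toIntLinearMap ≤ LinearMap.range u := by
    intro x hx
    have h1 : ∀ v : HeightOneSpectrum (𝓞 L), v.valuation L (x.toMul : L) = 1 := fun v =>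
      (hone v _).1 (DFunLike.congr_fun (show φ x = 0 from hx) v)
    obtain ⟨a, ha⟩ := HeightOneSpectrum.mem_integers_of_valuation_le_one L (x.toMul : L)
      fun v => (h1 v).le
    obtain ⟨b, hb⟩ := HeightOneSpectrum.mem_integers_of_valuation_le_one L
      ((x.toMul⁻¹ : Lˣ) : L) fun v => by
        rw [Units.val_inv_eq_inv_val, map_inv₀, h1 v, inv_one]
    have hab : a * b = 1 := by
      apply FaithfulSMul.algebraMap_injective (𝓞 L) L
      rw [map_mul, ha, hb, map_one]
      exact x.toMul.mul_inv
    refine ⟨Additive.ofMul ⟨a, b, hab, by rw [mul_comm, hab]⟩, ?_⟩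
    apply Additive.toMul.injective
    exact Units.ext ha
  have : Module.Finite ℤ (LinearMap.range u) := inferInstance
  exact Module.Finite.of_injective (Submodule.inclusion hle) (Submodule.inclusion_injective hle)

/-! ### The group of units modulo the rationals -/

section Quadratic
variable {L : Type*} [Field L] [NumberField L]

/-- `ℚˣ` as a subgroup of `Lˣ`. -/
abbrev ratUnits (L : Type*) [Field L] [NumberField L] : Subgroup Lˣ :=
  (Units.map (algebraMap ℚ L).toMonoidHom).range

/-- For `n = 5` and `n ≥ 7` the residues `1` and `n - 1` are not the only ones coprime to `n`:
there is also `2` for odd `n`, and the greatest odd number less than `n / 2` for even `n`. -/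
theorem totient_le_two {n : ℕ} (hpos : 0 < n) (h : n.totient ≤ 2) : n = 1 ∨ n = 2 ∨ n = 3 ∨ n = 4 ∨ n = 6 := by
  have key : ∀ c, 1 < c → c < n - 1 → ¬ n.Coprime c := by
    intro c hc1 hc2 hc
    have hsub : ({1, n - 1, c} : Finset ℕ) ⊆ {a ∈ Finset.range n | n.Coprime a} := by
      intro x hx
      simp only [Finset.mem_insert, Finset.mem_singleton] at hx
      simp only [Finset.mem_filter, Finset.mem_range]
      rcases hx with rfl | rfl | rfl
      · exact ⟨by omega, by simp⟩
      · exact ⟨by omega, by rw [Nat.coprime_self_sub_right (by omega)]; simp⟩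
      · exact ⟨by omega, hc⟩
    have := Finset.card_le_card hsub
    rw [Finset.card_insert_of_notMem (by simp; omega), Finset.card_pair (by omega)] at this
    rw [Nat.totient] at h
    omega
  by_contra hn
  have h7 : n = 5 ∨ 7 ≤ n := by omega
  rcases h7 with rfl | h7
  · revert h; decide
  rcases Nat.even_or_odd' n with ⟨k, rfl | rfl⟩
  · rcases Nat.even_or_odd' k with ⟨m, rfl | rfl⟩
    · refine key (2 * m - 1) (by omega) (by omega) ?_
      have : 2 * (2 * m) = 2 + 2 * (2 * m - 1) := by omega
      rw [this, Nat.coprime_add_mul_right_left, Nat.coprime_two_left]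
      exact ⟨m - 1, by omega⟩
    · refine key (2 * m - 1) (by omega) (by omega) ?_
      have : 2 * (2 * m + 1) = 4 + 2 * (2 * m - 1) := by omega
      rw [this, Nat.coprime_add_mul_right_left]
      refine Nat.Coprime.pow_left 2 (m := 2) ?_
      rw [Nat.coprime_two_left]
      exact ⟨m - 1, by omega⟩
  · refine key 2 (by omega) (by omega) ?_
    rw [Nat.coprime_two_right]
    exact ⟨k, rfl⟩

variable {A : Type*} [CommGroup A] (π : Lˣ →* A)

/-- If `ℚ` is the fixed field of `σ`, then `x ↦ σ x / x` embeds `Lˣ/ℚˣ` into `Lˣ`. The quotient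
enters as any group `A` with a surjection `π : Lˣ →* A` of kernel `ℚˣ`. -/
theorem exists_injective_of_aut (σ : L ≃ₐ[ℚ] L)
    (hfix : ∀ x, σ x = x → x ∈ (algebraMap ℚ L).range)
    (hπ : Function.Surjective π) (hker : π.ker = ratUnits L) :
    ∃ e : A →* Lˣ, Function.Injective e ∧ ∀ x : Lˣ, (e (π x) : L) = σ x / x := by
  let d : Lˣ →* Lˣ := Units.map (σ : L →* L) / MonoidHom.id Lˣ
  have hd : ∀ x : Lˣ, (d x : L) = σ x / x := fun x => by simp [d]
  have hdker : π.ker = d.ker := by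
    rw [hker]
    ext x
    rw [MonoidHom.mem_ker, Units.ext_iff, hd, Units.val_one, div_eq_one_iff_eq x.ne_zero]
    constructor
    · rintro ⟨q, rfl⟩
      exact σ.commutes q
    · intro h
      obtain ⟨q, hq⟩ := hfix _ h
      have hq0 : q ≠ 0 := by rintro rfl; exact x.ne_zero (by rw [← hq, map_zero])
      exact ⟨Units.mk0 q hq0, Units.ext hq⟩
  let e : A →* Lˣ := π.liftOfSurjective hπ ⟨d, hdker.le⟩
  have he : ∀ x, e (π x) = d x := π.liftOfRightInverse_comp_apply _ _ ⟨d, hdker.le⟩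
  refine ⟨e, ?_, fun x => by rw [he, hd]⟩
  rw [injective_iff_map_eq_one]
  intro a ha
  obtain ⟨x, rfl⟩ := hπ a
  rw [he] at ha
  exact hdker.ge ha

theorem struct_of_aut {e : A →* Lˣ} (he : Function.Injective e) (hfg : ¬ Group.FG A) :
    Finite (Submodule.torsion ℤ (Additive A)) ∧
      Nonempty (Additive A ≃ₗ[ℤ] Submodule.torsion ℤ (Additive A) × (ℕ →₀ ℤ)) := by
  obtain ⟨φ, hφ⟩ := exists_map_finsupp_ker_finite L
  let e' : Additive A →ₗ[ℤ] Additive Lˣ := (MonoidHom.toAdditive e).toIntLinearMap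
  have he' : Function.Injective e' := he
  have hcL : Countable L := (Module.finBasis ℚ L).equivFun.injective.countable
  have hcU : Countable Lˣ := Units.val_injective.countable
  have hc : Countable (Additive A) := (show Function.Injective e from he).countable
  refine torsion_prod_of_map_finsupp (φ ∘ₗ e') ?_ ?_
  · let r : LinearMap.ker (φ ∘ₗ e') →ₗ[ℤ] LinearMap.ker φ := e'.restrict (fun x hx => hx)
    refine Module.Finite.of_injective r fun x y h => Subtype.ext (he' (congrArg Subtype.val h))
  · intro h
    exact hfg (by rw [GroupFG.iff_add_fg, ← Module.Finite.iff_addGroup_fg]; exact h)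

/-- A finite group of order `n` embedded in `Lˣ` is cyclic and `L` contains a primitive `n`-th root
of unity; for quadratic `L`, the degree of the `n`-th cyclotomic polynomial bounds `n`. -/
theorem card_torsion_mem (hdeg : Module.finrank ℚ L = 2) {T : Type*} [CommGroup T] [Finite T]
    (j : T →* Lˣ) (hj : Function.Injective j) :
    IsCyclic T ∧ (Nat.card T = 1 ∨ Nat.card T = 2 ∨ Nat.card T = 3 ∨ Nat.card T = 4 ∨
      Nat.card T = 6) ∧ ∃ ζ : L, IsPrimitiveRoot ζ (Nat.card T) := by
  have hcyc : IsCyclic T := isCyclic_of_injective_ringHom ((Units.coeHom L).comp j)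
    (Units.val_injective.comp hj)
  refine ⟨hcyc, ?_⟩
  obtain ⟨g, hg⟩ := IsCyclic.exists_ofOrder_eq_natCard (α := T)
  have hζ : IsPrimitiveRoot ((j g : Lˣ) : L) (Nat.card T) := by
    have := IsPrimitiveRoot.orderOf ((j g : Lˣ) : L)
    rwa [orderOf_units, orderOf_injective j hj, hg] at this
  have hpos : 0 < Nat.card T := Nat.card_pos
  refine ⟨totient_le_two hpos ?_, _, hζ⟩
  have h2 := cyclotomic_eq_minpoly_rat hζ hpos
  have h3 := minpoly.natDegree_le (A := ℚ) ((j g : Lˣ) : L)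
  rw [← h2, natDegree_cyclotomic, hdeg] at h3
  exact h3

/-- The structure of `A = Lˣ/ℚˣ` up to the order `n` of its torsion subgroup: a primitive `n`-th
root of unity lies in `L`, and a root of unity of the form `σ x / x` has order dividing `n`. -/
theorem exists_mulEquiv (hdeg : Module.finrank ℚ L = 2) (σ : L ≃ₐ[ℚ] L)
    (hfix : ∀ x, σ x = x → x ∈ (algebraMap ℚ L).range)
    (hπ : Function.Surjective π) (hker : π.ker = ratUnits L) (hfg : ¬ Group.FG A) :
    ∃ n : ℕ, (n = 1 ∨ n = 2 ∨ n = 3 ∨ n = 4 ∨ n = 6) ∧ (∃ ζ : L, IsPrimitiveRoot ζ n) ∧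
      (∀ x : L, x ≠ 0 → ∀ m : ℕ, 0 < m → IsPrimitiveRoot (σ x / x) m → m ∣ n) ∧
      Nonempty (A ≃* Multiplicative (ZMod n × (ℕ →₀ ℤ))) := by
  obtain ⟨e, he, hex⟩ := exists_injective_of_aut π σ hfix hπ hker
  obtain ⟨hfin, ⟨E⟩⟩ := struct_of_aut he hfg
  let T := Submodule.torsion ℤ (Additive A)
  let j : Multiplicative T →* Lˣ :=
    e.comp (AddMonoidHom.toMultiplicativeLeft T.subtype.toAddMonoidHom)
  have hj : Function.Injective j := he.comp Subtype.val_injective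
  have hfinT : Finite (Multiplicative T) := hfin
  obtain ⟨hcyc, hcard, hζ⟩ := card_torsion_mem hdeg j hj
  refine ⟨Nat.card (Multiplicative T), hcard, hζ, ?_, ?_⟩
  · intro x hx m hm hprim
    let y : A := π (Units.mk0 x hx)
    have hey : ((e y : Lˣ) : L) = σ x / x := hex _
    have hord : orderOf y = m := by
      rw [← orderOf_injective e he, ← orderOf_units, hey, hprim.eq_orderOf]
    have hy : Additive.ofMul y ∈ T := by
      refine ⟨⟨(m : ℤ), mem_nonZeroDivisors_of_ne_zero (by exact_mod_cast hm.ne')⟩, ?_⟩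
      change (m : ℤ) • Additive.ofMul y = 0
      rw [← ofMul_zpow, zpow_natCast, ← hord, pow_orderOf_eq_one, ofMul_one]
    have := orderOf_dvd_natCard (Multiplicative.ofAdd (⟨Additive.ofMul y, hy⟩ : T))
    rwa [← orderOf_injective j hj, show j _ = e y from rfl, orderOf_injective e he, hord] at this
  · let z : ZMod (Nat.card (Multiplicative T)) ≃+ T :=
      AddEquiv.toMultiplicative.symm (zmodCyclicMulEquiv hcyc)
    exact ⟨AddEquiv.toMultiplicativeRight
      (E.toAddEquiv.trans (z.symm.prodCongr (AddEquiv.refl _)))⟩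

theorem exists_bound_padicValRat (S : Finset ℚ) :
    ∃ N : ℕ, ∀ p : ℕ, p.Prime → N < p → ∀ q ∈ S, padicValRat p q = 0 := by
  refine ⟨∑ q ∈ S, (q.num.natAbs + q.den), fun p hp hN q hq => ?_⟩
  have hle : q.num.natAbs + q.den ≤ _ := Finset.single_le_sum (f := fun q : ℚ => q.num.natAbs + q.den)
    (fun _ _ => Nat.zero_le _) hq
  by_cases h0 : q = 0
  · simp [h0]
  have hnum : 0 < q.num.natAbs := Int.natAbs_pos.2 (Rat.num_ne_zero.2 h0)
  have hden := q.den_pos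
  have h1 : ¬ p ∣ q.num.natAbs := fun h => by have := Nat.le_of_dvd hnum h; omega
  have h2 : ¬ p ∣ q.den := fun h => by have := Nat.le_of_dvd hden h; omega
  rw [padicValRat, padicValInt, padicValNat.eq_zero_of_not_dvd h1,
    padicValNat.eq_zero_of_not_dvd h2]
  rfl

/-- Arbitrarily large primes exactly divide a value of `a² - f`. With `M = 2 * N!` and `a = f * M`,
a prime factor `p` of `f * M² - 1` divides `a² - f` and none of `2`, `f` and `a`; if `p²` divides
`a² - f`, then it does not divide `(a + p)² - f`. -/
theorem exists_prime_sq_sub (f : ℤ) (hf : f ≠ 0) (N : ℕ) :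
    ∃ p : ℕ, p.Prime ∧ N < p ∧ ∃ a : ℤ, (p : ℤ) ∣ a ^ 2 - f ∧ ¬ (p : ℤ) ^ 2 ∣ a ^ 2 - f := by
  let M : ℤ := 2 * (N.factorial : ℤ)
  let z : ℤ := f * M ^ 2 - 1
  have hM : 2 ≤ M := by
    have : (1 : ℤ) ≤ N.factorial := by exact_mod_cast N.factorial_pos
    simp only [M]; omega
  have hz : z.natAbs ≠ 1 := by
    intro h
    rcases Int.natAbs_eq z with h' | h' <;> rw [h] at h' <;> simp only [z] at h'
    · rcases lt_or_gt_of_ne hf with h0 | h0 <;> push_cast at h' <;> nlinarith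
    · have : f * M ^ 2 = 0 := by push_cast at h'; linarith
      rcases mul_eq_zero.1 this with h1 | h1
      · exact hf h1
      · have := pow_eq_zero_iff (two_ne_zero) |>.1 h1
        omega
  obtain ⟨p, hp, hpz⟩ := Nat.exists_prime_and_dvd hz
  have hpz' : (p : ℤ) ∣ f * M ^ 2 - 1 := Int.natCast_dvd.2 hpz
  have hpZ : Prime (p : ℤ) := Nat.prime_iff_prime_int.1 hp
  have hpM : ¬ (p : ℤ) ∣ M := fun h => by
    have h1 : (p : ℤ) ∣ 1 := by
      have := dvd_sub (Dvd.dvd.mul_left (dvd_pow h two_ne_zero) f) hpz'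
      simpa using this
    exact hpZ.not_dvd_one h1
  have hpf : ¬ (p : ℤ) ∣ f := fun h => by
    have h1 : (p : ℤ) ∣ 1 := by
      have := dvd_sub (Dvd.dvd.mul_right h (M ^ 2)) hpz'
      simpa using this
    exact hpZ.not_dvd_one h1
  have hpN : N < p := by
    by_contra h
    exact hpM (Dvd.dvd.mul_left (Int.natCast_dvd_natCast.2
      (Nat.dvd_factorial hp.pos (not_lt.1 h))) 2)
  refine ⟨p, hp, hpN, ?_⟩
  have ha : (p : ℤ) ∣ (f * M) ^ 2 - f := by
    have : (f * M) ^ 2 - f = f * (f * M ^ 2 - 1) := by ring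
    rw [this]; exact Dvd.dvd.mul_left hpz' f
  by_cases h : (p : ℤ) ^ 2 ∣ (f * M) ^ 2 - f
  · have hexp : (f * M + p) ^ 2 - f = ((f * M) ^ 2 - f) + p * (2 * (f * M)) + p ^ 2 := by ring
    refine ⟨f * M + p, ?_, fun h' => ?_⟩
    · rw [hexp]
      exact dvd_add (dvd_add ha (dvd_mul_right _ _)) (dvd_pow_self _ two_ne_zero)
    · rw [hexp, dvd_add_self_right, dvd_add_right h, pow_two,
        mul_dvd_mul_iff_left hpZ.ne_zero] at h'
      rcases hpZ.dvd_or_dvd h' with h2 | h2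
      · exact hpM (Dvd.dvd.mul_right h2 _)
      · exact (hpZ.dvd_or_dvd h2).elim hpf hpM
  · exact ⟨f * M, ha, h⟩

/-- If `A = Lˣ/ℚˣ` were generated by finitely many classes, then at every large prime `p` all norms
would have even valuation, since the norm of a rational is a square. -/
theorem not_fg (f : ℤ) (hf : f ≠ 0) (δ : L) (hδ : δ ^ 2 = f) (σ : L ≃ₐ[ℚ] L) (hσ : σ δ = -δ)
    (hdeg : Module.finrank ℚ L = 2)
    (hπ : Function.Surjective π) (hker : π.ker = ratUnits L) : ¬ Group.FG A := by
  classical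
  intro hfg
  obtain ⟨S, hS⟩ := Group.fg_def.1 hfg
  let g := Function.surjInv hπ
  have hg : ∀ a, π (g a) = a := Function.surjInv_eq hπ
  obtain ⟨N, hN⟩ := exists_bound_padicValRat (S.image fun a => Algebra.norm ℚ (g a : L))
  obtain ⟨p, hp, hNp, a, ha1, ha2⟩ := exists_prime_sq_sub f hf N
  have : Fact p.Prime := ⟨hp⟩
  have hn0 : ∀ x : Lˣ, Algebra.norm ℚ (x : L) ≠ 0 := fun x =>
    Algebra.norm_ne_zero_iff.2 x.ne_zero
  -- the units whose norm has even `p`-adic valuation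
  let H : Subgroup Lˣ :=
    { carrier := {x | Even (padicValRat p (Algebra.norm ℚ (x : L)))}
      one_mem' := by simp
      mul_mem' := fun {x y} hx hy => by
        simp only [Set.mem_ofPred_eq, Units.val_mul, map_mul] at hx hy ⊢
        rw [padicValRat.mul (hn0 x) (hn0 y)]
        exact hx.add hy
      inv_mem' := fun {x} hx => by
        have h1 : Algebra.norm ℚ ((x⁻¹ : Lˣ) : L) = (Algebra.norm ℚ (x : L))⁻¹ :=
          eq_inv_of_mul_eq_one_left (by rw [← map_mul, Units.inv_mul, map_one])
        simp only [Set.mem_ofPred_eq] at hx ⊢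
        rw [h1, padicValRat.inv]
        exact hx.neg }
  have hH : ∀ x : Lˣ, x ∈ H ↔ Even (padicValRat p (Algebra.norm ℚ (x : L))) := fun _ => Iff.rfl
  have hmap : H.map π = ⊤ := by
    rw [eq_top_iff, ← hS, Subgroup.closure_le]
    intro s hs
    refine ⟨g s, ?_, hg s⟩
    change Even _
    rw [hN p hp hNp _ (Finset.mem_image_of_mem _ hs)]
    exact Even.zero
  have hker' : π.ker ≤ H := by
    rw [hker]
    rintro _ ⟨q, rfl⟩
    rw [hH]
    change Even (padicValRat p (Algebra.norm ℚ (algebraMap ℚ L q)))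
    rw [Algebra.norm_algebraMap, hdeg, padicValRat.pow]
    exact even_two_mul _
  have htop : ∀ x, x ∈ H := by
    intro x
    obtain ⟨y, hy, hxy⟩ : π x ∈ H.map π := hmap ▸ Subgroup.mem_top _
    have : y⁻¹ * x ∈ H := hker' (by rw [MonoidHom.mem_ker, map_mul, map_inv, hxy, inv_mul_cancel])
    simpa using H.mul_mem hy this
  set q : ℤ := a ^ 2 - f with hq
  have hq0 : q ≠ 0 := fun h => ha2 (h ▸ dvd_zero _)
  have hmul : ((a : L) + δ) * σ ((a : L) + δ) = algebraMap ℚ L (q : ℚ) := by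
    rw [map_add, hσ, map_intCast, map_intCast, hq]
    push_cast
    linear_combination -hδ
  -- comparing with the norm of the rational number `q` determines the norm of `a + δ` up to sign
  have hnorm : Algebra.norm ℚ ((a : L) + δ) ^ 2 = (q : ℚ) ^ 2 := by
    have := congrArg (Algebra.norm ℚ) hmul
    rw [map_mul, Algebra.norm_eq_of_algEquiv, Algebra.norm_algebraMap, hdeg, ← pow_two] at this
    exact this
  have hne : (a : L) + δ ≠ 0 := by
    intro h
    rw [h, zero_mul] at hmul
    exact hq0 (by exact_mod_cast (map_eq_zero _).1 hmul.symm)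
  have hval : padicValRat p (Algebra.norm ℚ ((a : L) + δ)) = 1 := by
    have h1 := congrArg (padicValRat p) hnorm
    rw [padicValRat.pow, padicValRat.pow,
      padicValRat.of_int] at h1
    have h2 : padicValInt p q = 1 := by
      have h3 : 1 ≤ padicValInt p q :=
        ((padicValInt_dvd_iff 1 q).1 (by simpa using ha1)).resolve_left hq0
      have h4 : ¬ 2 ≤ padicValInt p q := fun h => ha2 ((padicValInt_dvd_iff 2 q).2 (Or.inr h))
      omega
    rw [h2] at h1
    push_cast at h1
    linarith
  have := htop (Units.mk0 _ hne)
  rw [hH, Units.val_mk0, hval] at this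
  exact absurd this (by decide)

end Quadratic

/-! ### Quadratic fields -/

theorem mul_self_eq_one_of_squarefree {f k d : ℤ} (hsf : Squarefree f) (h : f = d * (k * k)) :
    k * k = 1 := by
  rcases Int.isUnit_iff.1 (hsf k (h ▸ dvd_mul_left _ _)) with rfl | rfl <;> norm_num

section Sqrt
variable {L : Type*} [Field L] [NumberField L] {f : ℤ} {δ : L}

theorem not_isSquare_of_squarefree (hsf : Squarefree f) (hf1 : f ≠ 1) : ¬ IsSquare (f : ℚ) := by
  rw [Rat.isSquare_intCast_iff]
  rintro ⟨k, hk⟩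
  have h1 := mul_self_eq_one_of_squarefree (k := k) (d := 1) hsf (by rw [hk, one_mul])
  exact hf1 (hk.trans h1)

/-- The elements `1` and `δ` are linearly independent over `ℚ`. -/
theorem coeff_eq_zero (hsf : Squarefree f) (hf1 : f ≠ 1) (hδ : δ ^ 2 = f) {a b : ℚ}
    (h : (a : L) + b * δ = 0) : b = 0 := by
  by_contra hb
  refine not_isSquare_of_squarefree hsf hf1 ⟨a / b, ?_⟩
  have hbL : (b : L) ≠ 0 := by exact_mod_cast hb
  have h1 : δ = -(a / b : L) := by field_simp; linear_combination h
  have h2 : ((f : ℚ) : L) = ((a / b * (a / b) : ℚ) : L) := by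
    push_cast
    rw [← hδ, h1]
    ring
  exact_mod_cast h2

/-- If `(a + b * δ)²` is a negative rational, then the cross term gives `a * b = 0`, and `a²` alone
is not negative, so `a = 0`. -/
theorem exists_rat_sq_mul (hsf : Squarefree f) (hf1 : f ≠ 1) (hδ : δ ^ 2 = f)
    (hrep : ∀ x : L, ∃ a b : ℚ, x = a + b * δ) {c : ℤ} (hc : c < 0) {z : L} (hz : z ^ 2 = c) :
    ∃ b : ℚ, b ^ 2 * f = c := by
  obtain ⟨a, b, rfl⟩ := hrep z
  have h0 : ((a ^ 2 + b ^ 2 * f - c : ℚ) : L) + ((2 * a * b : ℚ) : L) * δ = 0 := by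
    push_cast
    linear_combination hz - (b : L) ^ 2 * hδ
  have hab := coeff_eq_zero hsf hf1 hδ h0
  rw [hab, Rat.cast_zero, zero_mul, add_zero] at h0
  have h1 : a ^ 2 + b ^ 2 * f - c = 0 := by exact_mod_cast h0
  have hc' : (c : ℚ) < 0 := by exact_mod_cast hc
  refine ⟨b, ?_⟩
  have hab' : a = 0 ∨ b = 0 := by simpa using hab
  rcases hab' with rfl | rfl
  · linarith
  · nlinarith [sq_nonneg a]

theorem eq_neg_one_of_sq (hsf : Squarefree f) {b : ℚ} (h : b ^ 2 * f = -1) : f = -1 := by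
  have hb : b ≠ 0 := by rintro rfl; norm_num at h
  have h1 : IsSquare ((-f : ℤ) : ℚ) := ⟨1 / b, by push_cast; field_simp; linarith⟩
  obtain ⟨k, hk⟩ := Rat.isSquare_intCast_iff.1 h1
  have := mul_self_eq_one_of_squarefree (k := k) (d := -1) hsf (by linarith)
  linarith

theorem eq_neg_three_of_sq (hsf : Squarefree f) {b : ℚ} (h : b ^ 2 * f = -3) : f = -3 := by
  have hb : b ≠ 0 := by rintro rfl; norm_num at h
  have h1 : IsSquare ((-3 * f : ℤ) : ℚ) :=
    ⟨3 / b, by push_cast; field_simp; linarith⟩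
  obtain ⟨k, hk⟩ := Rat.isSquare_intCast_iff.1 h1
  have h3 : (3 : ℤ) ∣ k := by
    have : (3 : ℤ) ∣ k * k := ⟨-f, by linarith⟩
    exact (Int.prime_three.dvd_or_dvd this).elim id id
  obtain ⟨d, rfl⟩ := h3
  have := mul_self_eq_one_of_squarefree (k := d) (d := -3) hsf (by linarith)
  linarith

/-- The structure of `Lˣ/ℚˣ` for a quadratic field `L = ℚ(δ)`, `δ² = f`, with conjugation `σ`. -/
theorem exists_mulEquiv_of_sqrt (hsf : Squarefree f) (hf0 : f ≠ 0) (hf1 : f ≠ 1) (hδ : δ ^ 2 = f)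
    (hrep : ∀ x : L, ∃ a b : ℚ, x = a + b * δ) (hdeg : Module.finrank ℚ L = 2)
    (σ : L ≃ₐ[ℚ] L) (hσ : σ δ = -δ) {A : Type*} [CommGroup A] (π : Lˣ →* A)
    (hπ : Function.Surjective π) (hker : π.ker = ratUnits L) :
    ∃ n : ℕ, (f ≠ -1 ∧ f ≠ -3 → n = 2) ∧ (f = -1 → n = 4) ∧ (f = -3 → n = 6) ∧
      Nonempty (A ≃* Multiplicative (ZMod n × (ℕ →₀ ℤ))) := by
  have hδ0 : δ ≠ 0 := by
    rintro rfl
    have : (f : L) = 0 := by rw [← hδ]; ring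
    exact hf0 (by exact_mod_cast this)
  have hratσ : ∀ q : ℚ, σ q = q := fun q => map_ratCast σ q
  have hfix : ∀ x, σ x = x → x ∈ (algebraMap ℚ L).range := by
    intro x hx
    obtain ⟨a, b, rfl⟩ := hrep x
    rw [map_add, map_mul, hσ, hratσ, hratσ] at hx
    have hb : b = 0 := coeff_eq_zero (a := 0) hsf hf1 hδ (by push_cast; linear_combination -hx / 2)
    exact ⟨a, by simp [hb]⟩
  obtain ⟨n, hn, ⟨ζ, hζ⟩, hdvd, hE⟩ := exists_mulEquiv π hdeg σ hfix hπ hker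
    (not_fg π f hf0 δ hδ σ hσ hdeg hπ hker)
  have h2 : 2 ∣ n := by
    refine hdvd δ hδ0 2 two_pos ?_
    rw [hσ, neg_div, div_self hδ0]
    exact IsPrimitiveRoot.neg_one 0 two_ne_zero.symm
  have h4 : n = 4 → f = -1 := by
    rintro rfl
    have hz : ζ ^ 2 = ((-1 : ℤ) : L) := by
      have h := (hζ.pow (by norm_num) (show 4 = 2 * 2 from rfl)).eq_neg_one_of_two_right
      simpa using h
    obtain ⟨b, hb⟩ := exists_rat_sq_mul hsf hf1 hδ hrep (by norm_num) hz
    exact eq_neg_one_of_sq hsf (by simpa using hb)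
  have h6 : n = 6 → f = -3 := by
    rintro rfl
    -- `ζ ^ 2` is a primitive cube root of unity `ω`, and `2ω + 1` is a square root of `-3`
    have hz : (2 * ζ ^ 2 + 1) ^ 2 = ((-3 : ℤ) : L) := by
      have h3 := hζ.pow (by norm_num) (show 6 = 2 * 3 from rfl)
      have h := h3.geom_sum_eq_zero (by norm_num)
      simp only [Finset.sum_range_succ, Finset.sum_range_zero] at h
      push_cast
      linear_combination 4 * h
    obtain ⟨b, hb⟩ := exists_rat_sq_mul hsf hf1 hδ hrep (by norm_num) hz
    exact eq_neg_three_of_sq hsf (by simpa using hb)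
  have hne : (1 : L) - δ ≠ 0 := by
    intro h
    exact one_ne_zero (neg_eq_zero.1
      (coeff_eq_zero (a := 1) (b := -1) hsf hf1 hδ (by push_cast; linear_combination h)))
  have hσ1 : σ (1 - δ) = 1 + δ := by rw [map_sub, hσ, map_one, sub_neg_eq_add]
  refine ⟨n, ?_, ?_, ?_, hE⟩
  · rintro ⟨ha, hb⟩
    have := mt h4 ha
    have := mt h6 hb
    omega
  · intro h
    have : 4 ∣ n := by
      have hq : δ ^ 2 = -1 := by rw [hδ, h]; push_cast; ring
      refine hdvd (1 - δ) hne 4 (by norm_num) ?_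
      have : σ (1 - δ) / (1 - δ) = δ := by
        rw [hσ1, div_eq_iff hne]; linear_combination hq
      rw [this, IsPrimitiveRoot.iff_orderOf]
      refine orderOf_eq_prime_pow (p := 2) (n := 1) ?_ ?_
      · rw [pow_one, hq]; norm_num
      · linear_combination (δ ^ 2 - 1) * hq
    omega
  · intro h
    -- together with `2 ∣ n`, divisibility by `3` is enough
    have : 3 ∣ n := by
      have hq : δ ^ 2 = -3 := by rw [hδ, h]; push_cast; ring
      refine hdvd (1 - δ) hne 3 (by norm_num) ?_
      have : σ (1 - δ) / (1 - δ) = (-1 + δ) / 2 := by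
        rw [hσ1, div_eq_iff hne]; linear_combination hq / 2
      rw [this, IsPrimitiveRoot.iff_orderOf]
      refine orderOf_eq_prime (p := 3) ?_ ?_
      · linear_combination (δ - 3) / 8 * hq
      · intro h1
        have h3 : δ = 3 := by linear_combination 2 * h1
        rw [h3] at hq
        norm_num at hq
    omega
end Sqrt


/-- The polynomial is a variable `p`, rather than `X ^ 2 - C f`, so that the types depending on it
do not unfold during elaboration. -/
theorem exists_mulEquiv_adjoinRoot {f : ℤ} (hsf : Squarefree f) (hf0 : f ≠ 0) (hf1 : f ≠ 1)
    (p : ℚ[X]) (hp : p = X ^ 2 - C (f : ℚ)) :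
    ∃ n : ℕ, (f ≠ -1 ∧ f ≠ -3 → n = 2) ∧ (f = -1 → n = 4) ∧ (f = -3 → n = 6) ∧
      Nonempty (((AdjoinRoot p)ˣ ⧸ (Units.map (algebraMap ℚ (AdjoinRoot p)).toMonoidHom).range) ≃*
        Multiplicative (ZMod n × (ℕ →₀ ℤ))) := by
  have hirr : Irreducible p := hp ▸
    (X_pow_sub_C_irreducible_iff_of_prime Nat.prime_two).2 fun b hb =>
      not_isSquare_of_squarefree hsf hf1 ⟨b, by rw [← hb, pow_two]⟩
  have hmonic : p.Monic := hp ▸ monic_X_pow_sub_C _ two_ne_zero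
  have hnd : p.natDegree = 2 := hp ▸ natDegree_X_pow_sub_C
  have : Fact (Irreducible p) := ⟨hirr⟩
  have hfd : FiniteDimensional ℚ (AdjoinRoot p) := (AdjoinRoot.powerBasis hirr.ne_zero).finite
  have hdeg : Module.finrank ℚ (AdjoinRoot p) = 2 := by
    rw [(AdjoinRoot.powerBasis hirr.ne_zero).finrank, AdjoinRoot.powerBasis_dim, hnd]
  have hch : CharZero (AdjoinRoot p) := algebraRat.charZero _
  have hnf : NumberField (AdjoinRoot p) := { }
  have heval : ∀ x : AdjoinRoot p, aeval x p = x ^ 2 - (f : AdjoinRoot p) := fun x =>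
    (congrArg (aeval x) hp).trans (by
      rw [map_sub, map_pow, aeval_X, aeval_C, map_intCast])
  have hδ : AdjoinRoot.root p ^ 2 = (f : AdjoinRoot p) := by
    exact sub_eq_zero.1 ((heval _).symm.trans ((AdjoinRoot.aeval_eq p).trans AdjoinRoot.mk_self))
  have hrep : ∀ x : AdjoinRoot p, ∃ a b : ℚ,
      x = (a : AdjoinRoot p) + (b : AdjoinRoot p) * AdjoinRoot.root p := by
    intro x
    obtain ⟨g, rfl⟩ := AdjoinRoot.mk_surjective x
    have hlt : (g %ₘ p).natDegree ≤ 1 := by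
      have := natDegree_modByMonic_lt g hmonic (by intro h; rw [h] at hnd; simp at hnd)
      omega
    obtain ⟨b, a, hab⟩ := exists_eq_X_add_C_of_natDegree_le_one hlt
    refine ⟨a, b, ?_⟩
    have h1 : AdjoinRoot.mk p g = AdjoinRoot.mk p (g %ₘ p) := by
      conv_lhs => rw [← modByMonic_add_div g p]
      rw [map_add, map_mul, AdjoinRoot.mk_self, zero_mul, add_zero]
    rw [h1, hab, map_add, map_mul, AdjoinRoot.mk_C, AdjoinRoot.mk_C, AdjoinRoot.mk_X,
      add_comm, eq_ratCast, eq_ratCast]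
  obtain ⟨σ, hσ⟩ : ∃ σ : AdjoinRoot p ≃ₐ[ℚ] AdjoinRoot p,
      σ (AdjoinRoot.root p) = -AdjoinRoot.root p := by
    have hroot : eval₂ (Algebra.ofId ℚ (AdjoinRoot p) : ℚ →+* AdjoinRoot p)
        (-AdjoinRoot.root p) p = 0 := by
      refine (heval (-AdjoinRoot.root p)).trans ?_
      rw [neg_sq, hδ, sub_self]
    let s : AdjoinRoot p →ₐ[ℚ] AdjoinRoot p :=
      AdjoinRoot.liftAlgHom p (Algebra.ofId ℚ (AdjoinRoot p)) (-AdjoinRoot.root p) hroot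
    have hs : s (AdjoinRoot.root p) = -AdjoinRoot.root p := AdjoinRoot.liftAlgHom_root _ _ _ _
    have hb : Function.Bijective s := AlgHom.bijective s
    exact ⟨AlgEquiv.ofBijective s hb, hs⟩
  let R := ratUnits (AdjoinRoot p)
  let instQ : CommGroup ((AdjoinRoot p)ˣ ⧸ R) := QuotientGroup.Quotient.commGroup R
  let π : (AdjoinRoot p)ˣ →* (AdjoinRoot p)ˣ ⧸ R := QuotientGroup.mk' R
  have hπ : Function.Surjective π := QuotientGroup.mk'_surjective R
  have hker : π.ker = R := QuotientGroup.ker_mk' R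
  exact exists_mulEquiv_of_sqrt (A := (AdjoinRoot p)ˣ ⧸ R) hsf hf0 hf1 hδ hrep hdeg σ hσ π hπ hker

/-- Let f be a squarefree integer, f ≠ 0, f ≠ 1, and let `L = ℚ(√f) = ℚ[X]/(X²−f)`.
Then `Lˣ/ℚˣ` is isomorphic, as an abstract group, to `ℤ/2ℤ × F` if `f ∉ {−1, −3}`,
to `ℤ/4ℤ × F` if `f = −1`, and to `ℤ/6ℤ × F` if `f = −3`, where F is a free abelian
group of countably infinite rank. -/
theorem stmt19 (f : ℤ) (hsf : Squarefree f) (hf0 : f ≠ 0) (hf1 : f ≠ 1) :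
    ((f ≠ -1 ∧ f ≠ -3) →
      Nonempty (((AdjoinRoot (X ^ 2 - C (f : ℚ)))ˣ ⧸
          (Units.map (algebraMap ℚ (AdjoinRoot (X ^ 2 - C (f : ℚ)))).toMonoidHom).range) ≃*
        Multiplicative (ZMod 2 × (ℕ →₀ ℤ)))) ∧
    (f = -1 →
      Nonempty (((AdjoinRoot (X ^ 2 - C (f : ℚ)))ˣ ⧸
          (Units.map (algebraMap ℚ (AdjoinRoot (X ^ 2 - C (f : ℚ)))).toMonoidHom).range) ≃*
        Multiplicative (ZMod 4 × (ℕ →₀ ℤ)))) ∧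
    (f = -3 →
      Nonempty (((AdjoinRoot (X ^ 2 - C (f : ℚ)))ˣ ⧸
          (Units.map (algebraMap ℚ (AdjoinRoot (X ^ 2 - C (f : ℚ)))).toMonoidHom).range) ≃*
        Multiplicative (ZMod 6 × (ℕ →₀ ℤ)))) := by
  obtain ⟨n, h2, h4, h6, hE⟩ := exists_mulEquiv_adjoinRoot hsf hf0 hf1 _ rfl
  refine ⟨fun h => ?_, fun h => ?_, fun h => ?_⟩
  · obtain rfl := h2 h
    exact hE
  · obtain rfl := h4 h
    exact hE
  · obtain rfl := h6 h
    exact hE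
end
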